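/- Let n \ge 2 and a \ge 1 be integers. There exists an integer N (depending on n and a) such that for every odd integer q > N the following holds. If a is odd, writing g(y) := y \cdot (1 + y^2 + y^4 + ... + y^{2a})^n \cdot (1 + y^2 + y^4 + ... + y^{a-1}) = \sum_k g_k y^k, then (a+1)^{n+1} \cdot N_{BC}(n,q,1,a) = 2 \sum_k g_k (q-k)^n. If a is even, writing g(y) := (1 + y^2 + y^4 + ... + y^{2a})^n \cdot (1 + y + y^2 + ... + y^a) = \sum_k g_k y^k, then (a+1)^{n+1} \cdot N_{BC}(n,q,1,a) = \sum_k g_k (q-k)^n. -/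

import Mathlib

open Polynomial

/-- `x` avoids the integer interval `[u, v]` in `ZMod q`. -/
def Avoids {q : ℕ} (x : ZMod q) (u v : ℤ) : Prop :=
  ∀ k : ℤ, u ≤ k → k ≤ v → x ≠ (k : ZMod q)

/-- Count for the type `B` deformation: `x_i`, `x_i - x_j` and `x_i + x_j`
all avoid `[u, v]`. -/
noncomputable def N_B (n q : ℕ) (u v : ℤ) : ℕ :=
  Set.ncard {x : Fin n → ZMod q |
    (∀ i, Avoids (x i) u v) ∧
    ∀ i j : Fin n, i < j → Avoids (x i - x j) u v ∧ Avoids (x i + x j) u v}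

/-- Count for the type `C` deformation: `2x_i`, `x_i - x_j` and `x_i + x_j`
all avoid `[u, v]`. -/
noncomputable def N_C (n q : ℕ) (u v : ℤ) : ℕ :=
  Set.ncard {x : Fin n → ZMod q |
    (∀ i, Avoids (2 * x i) u v) ∧
    ∀ i j : Fin n, i < j → Avoids (x i - x j) u v ∧ Avoids (x i + x j) u v}

/-- Count for the type `BC` deformation: `x_i`, `2x_i`, `x_i - x_j` and `x_i + x_j`
all avoid `[u, v]`. -/
noncomputable def N_BC (n q : ℕ) (u v : ℤ) : ℕ :=
  Set.ncard {x : Fin n → ZMod q |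
    (∀ i, Avoids (x i) u v ∧ Avoids (2 * x i) u v) ∧
    ∀ i j : Fin n, i < j → Avoids (x i - x j) u v ∧ Avoids (x i + x j) u v}

/-- Count for the type `D` deformation: `x_i - x_j` and `x_i + x_j`
avoid `[u, v]`. -/
noncomputable def N_D (n q : ℕ) (u v : ℤ) : ℕ :=
  Set.ncard {x : Fin n → ZMod q |
    ∀ i j : Fin n, i < j → Avoids (x i - x j) u v ∧ Avoids (x i + x j) u v}

/-- `1 + y + y^2 + ... + y^(m-1)`. -/
noncomputable def phi (m : ℕ) : ℚ[X] := ∑ i ∈ Finset.range m, X ^ i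

/-- `1 + y^2 + y^4 + ... + y^(2(m-1))`. -/
noncomputable def phi2 (m : ℕ) : ℚ[X] := ∑ i ∈ Finset.range m, X ^ (2 * i)

/-- For `g = ∑_k g_k y^k`, the sum `∑_k g_k (q - k)^n`. -/
noncomputable def polysum (g : ℚ[X]) (q n : ℕ) : ℚ :=
  ∑ k ∈ Finset.range (g.natDegree + 1), g.coeff k * ((q : ℚ) - (k : ℚ)) ^ n

/-!
Put `b = a + 1` and represent a point of `(ZMod q)ⁿ` by integers in `(-q/2, q/2]`. List the absolute
values of its coordinates in increasing order after a leading `0`, breaking ties by a total order on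
the origin and the indices that depends only on the signs. The avoidance conditions then say exactly
that the gap at each descent of that order is at least `b`, the gap from the last entry, doubled, to
`q` included. So for each sign pattern and order one counts natural solutions of
`2 g₁ + ⋯ + 2 gₙ + g₀ = q` in which certain `gᵢ` are at least `b`. Writing `gᵢ = b hᵢ + eᵢ` with
`0 ≤ eᵢ < b` turns `gᵢ ≥ b` into `hᵢ ≥ 1`, hence expresses the count for `b` as the difference
operator `G(S)`, where `G = phi2 b ^ n * phi b` and `S` is the backward shift, applied to the
dilation by `b` of the count for `b = 1`; and the latter is `tⁿ`, since then nothing is avoided.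
Therefore `bⁿ N_BC = G(S)(tⁿ 1_{b ∣ t})` at `q`.

It remains to replace `b 1_{b ∣ t}` by `1`. If a polynomial in `S` lies in the `(n + 1)`-st power of
the annihilator of a function `f`, it annihilates `tⁿ f`, because the commutator of `P(S)` with
multiplication by `t` is `-S P'(S)`. When `b` is odd, `phi b` and `phi2 b` both annihilate
`b 1_{b ∣ t} - 1`. When `b = 2c` is even, the same argument replaces `c 1_{b ∣ t}` by `1_{2 ∣ t}`,
and the parity of `q` disposes of the rest.
-/

section ShiftOperator

variable {R : Type*} [CommSemiring R]

variable (R) in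
/-- The backward shift on functions on the integers, whose polynomials are the difference operators
used below. -/
def shift : Module.End R (ℤ → R) where
  toFun f t := f (t - 1)
  map_add' _ _ := rfl
  map_smul' _ _ := rfl

theorem shift_apply (f : ℤ → R) (t : ℤ) : shift R f t = f (t - 1) := rfl

theorem shift_pow_apply (k : ℕ) (f : ℤ → R) (t : ℤ) : (shift R ^ k) f t = f (t - k) := by
  induction k generalizing t with
  | zero => simp
  | succ k ih =>
    rw [pow_succ', Module.End.mul_apply, shift_apply, ih]
    push_cast
    ring_nf

theorem aeval_shift_apply (P : R[X]) (f : ℤ → R) (t : ℤ) :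
    aeval (shift R) P f t = ∑ k ∈ P.support, P.coeff k * f (t - k) := by
  simp [aeval_def, eval₂_eq_sum, Polynomial.sum, shift_pow_apply, Module.algebraMap_end_apply]

theorem aeval_shift_congr {P : R[X]} {f g : ℤ → R} {t : ℤ}
    (h : ∀ k ∈ P.support, f (t - k) = g (t - k)) :
    aeval (shift R) P f t = aeval (shift R) P g t := by
  rw [aeval_shift_apply, aeval_shift_apply]
  exact Finset.sum_congr rfl fun k hk => by rw [h k hk]

theorem aeval_shift_X_mul (P : R[X]) (f : ℤ → R) (t : ℤ) :
    aeval (shift R) (X * P) f t = aeval (shift R) P f (t - 1) := by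
  rw [map_mul, aeval_X, Module.End.mul_apply, shift_apply]

theorem polysum_eq_aeval_shift (g : ℚ[X]) (q n : ℕ) :
    polysum g q n = aeval (shift ℚ) g (Int.cast ^ n) q := by
  rw [aeval_eq_sum_range, LinearMap.sum_apply, Finset.sum_apply, polysum]
  simp [shift_pow_apply]

end ShiftOperator

section ShiftAnnihilator

theorem derivation_apply_mem_pow {R A : Type*} [CommSemiring R] [CommSemiring A] [Algebra R A]
    (D : Derivation R A A) {I : Ideal A} {k : ℕ} {x : A} (hx : x ∈ I ^ (k + 1)) : D x ∈ I ^ k := by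
  induction k generalizing x with
  | zero => simp
  | succ k ih =>
    rw [pow_succ] at hx
    induction hx using Submodule.mul_induction_on' with
    | mem_mul_mem y hy z hz =>
      rw [D.leibniz]
      refine add_mem (Ideal.mul_mem_right _ _ hy) ?_
      rw [smul_eq_mul, mul_comm, pow_succ]
      exact Ideal.mul_mem_mul (ih hy) hz
    | add y _ z _ hy hz => rw [map_add]; exact add_mem hy hz

variable {R : Type*} [CommRing R]

theorem aeval_shift_cast_mul (P : R[X]) (f : ℤ → R) :
    aeval (shift R) P (Int.cast * f) =
      Int.cast * aeval (shift R) P f - shift R (aeval (shift R) (derivative P) f) := by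
  induction P using Polynomial.induction_on' with
  | add P Q hP hQ =>
    simp only [map_add, LinearMap.add_apply, hP, hQ]
    ring
  | monomial k c =>
    funext t
    cases k with
    | zero => simp
    | succ k =>
      simp [aeval_monomial, shift_pow_apply, shift_apply, Module.algebraMap_end_apply]
      ring_nf

/-- The polynomials in the backward shift that annihilate the function `f`. -/
def shiftAnnihilator (f : ℤ → R) : Ideal R[X] where
  carrier := {P | aeval (shift R) P f = 0}
  zero_mem' := by simp
  add_mem' {P Q} (hP : _ = 0) (hQ : _ = 0) := by simp [hP, hQ]
  smul_mem' P Q (hQ : _ = 0) := by simp [hQ]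

theorem mem_shiftAnnihilator {f : ℤ → R} {P : R[X]} :
    P ∈ shiftAnnihilator f ↔ aeval (shift R) P f = 0 := Iff.rfl

theorem mem_shiftAnnihilator_cast_pow_mul {f : ℤ → R} {k : ℕ} {P : R[X]}
    (hP : P ∈ shiftAnnihilator f ^ (k + 1)) : P ∈ shiftAnnihilator (Int.cast ^ k * f) := by
  induction k generalizing P with
  | zero => simpa using hP
  | succ k ih =>
    have hP' : aeval (shift R) P (Int.cast ^ k * f) = 0 := ih (Ideal.pow_le_pow_right (by simp) hP)
    have hdP : aeval (shift R) (derivative P) (Int.cast ^ k * f) = 0 :=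
      ih (derivation_apply_mem_pow derivative' hP)
    rw [mem_shiftAnnihilator, pow_succ', mul_assoc, aeval_shift_cast_mul, hP', hdP]
    simp

end ShiftAnnihilator

section Dilation

variable {R : Type*} [CommSemiring R]

variable (R) in
/-- The indicator function of the multiples of `b`. -/
def dvdIndicator (b : ℕ) (t : ℤ) : R := if (b : ℤ) ∣ t then 1 else 0

variable (R) in
/-- The polynomial `1 + X^s + ⋯ + X^(s(m-1))`, a common form of `phi` and `phi2`. -/
noncomputable def stepGeomSum (s m : ℕ) : R[X] := ∑ i ∈ Finset.range m, X ^ (s * i)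

theorem phi_eq_stepGeomSum (m : ℕ) : phi m = stepGeomSum ℚ 1 m := by
  simp only [phi, stepGeomSum, one_mul]

theorem phi2_eq_stepGeomSum (m : ℕ) : phi2 m = stepGeomSum ℚ 2 m := rfl

theorem stepGeomSum_mul (s m k : ℕ) :
    stepGeomSum R s (m * k) = stepGeomSum R s m * stepGeomSum R (s * m) k := by
  induction k with
  | zero => simp [stepGeomSum]
  | succ k ih =>
    rw [stepGeomSum, mul_add_one, Finset.sum_range_add, ← stepGeomSum, ih]
    simp only [stepGeomSum, Finset.sum_range_succ, mul_add, Finset.sum_mul, pow_add]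
    ring_nf

theorem aeval_shift_stepGeomSum_apply (s m : ℕ) (f : ℤ → R) (t : ℤ) :
    aeval (shift R) (stepGeomSum R s m) f t = ∑ i ∈ Finset.range m, f (t - s * i) := by
  simp [stepGeomSum, shift_pow_apply]

theorem dvd_sub_mul_iff_eq_val {s c : ℕ} [NeZero c] (h : s.Coprime c) {i : ℕ} (hi : i < c) (t : ℤ) :
    (c : ℤ) ∣ t - s * i ↔ i = ((s : ZMod c)⁻¹ * t).val := by
  have hs : (s : ZMod c) * (s : ZMod c)⁻¹ = 1 := ZMod.coe_mul_inv_eq_one s h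
  rw [← ZMod.intCast_zmod_eq_zero_iff_dvd]
  push_cast
  rw [sub_eq_zero]
  constructor
  · intro ht
    rw [ht, ← mul_assoc, mul_comm _ (s : ZMod c), hs, one_mul, ZMod.val_cast_of_lt hi]
  · rintro rfl
    rw [ZMod.natCast_val, ZMod.cast_id', id, ← mul_assoc, hs, one_mul]

theorem sum_dvdIndicator_sub_mul {s c : ℕ} (hc : 0 < c) (h : s.Coprime c) (t : ℤ) :
    ∑ i ∈ Finset.range c, dvdIndicator R c (t - s * i) = 1 := by
  have : NeZero c := ⟨hc.ne'⟩
  calc ∑ i ∈ Finset.range c, dvdIndicator R c (t - s * i)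
      = ∑ i ∈ Finset.range c, if i = ((s : ZMod c)⁻¹ * t).val then 1 else 0 :=
        Finset.sum_congr rfl fun i hi => by
          simp only [dvdIndicator, dvd_sub_mul_iff_eq_val h (Finset.mem_range.1 hi)]
    _ = 1 := by rw [Finset.sum_ite_eq', if_pos (Finset.mem_range.2 (ZMod.val_lt _))]

theorem aeval_stepGeomSum_dvdIndicator_mul {k s c : ℕ} (hk : 0 < k) (hc : 0 < c)
    (h : s.Coprime c) :
    aeval (shift R) (stepGeomSum R (k * s) c) (dvdIndicator R (k * c)) = dvdIndicator R k := by
  funext t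
  rw [aeval_shift_stepGeomSum_apply]
  by_cases ht : (k : ℤ) ∣ t
  · obtain ⟨u, rfl⟩ := ht
    have hscale (i : ℕ) : dvdIndicator R (k * c) (k * u - (k * s : ℕ) * i) =
        dvdIndicator R c (u - s * i) := by
      rw [dvdIndicator, dvdIndicator, Nat.cast_mul, Nat.cast_mul, mul_assoc, ← mul_sub]
      simp only [mul_dvd_mul_iff_left (Nat.cast_ne_zero (R := ℤ).2 hk.ne')]
    simp only [hscale, sum_dvdIndicator_sub_mul hc h]
    simp [dvdIndicator]
  · have hne (i : ℕ) : ¬ ((k * c : ℕ) : ℤ) ∣ t - (k * s : ℕ) * i := fun hd => ht <| by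
      rw [Nat.cast_mul, Nat.cast_mul, mul_assoc] at hd
      exact (dvd_sub_left (dvd_mul_right _ _)).1 (dvd_of_mul_right_dvd hd)
    simp only [dvdIndicator, hne, ht, if_false, Finset.sum_const_zero]

theorem aeval_stepGeomSum_dvdIndicator (k s m : ℕ) :
    aeval (shift R) (stepGeomSum R (k * s) m) (dvdIndicator R k) = (m : R) • dvdIndicator R k := by
  funext t
  have hper (i : ℕ) : dvdIndicator R k (t - (k * s : ℕ) * i) = dvdIndicator R k t := by
    rw [dvdIndicator, Nat.cast_mul, mul_assoc]
    simp only [dvd_sub_left (dvd_mul_right (k : ℤ) (s * i)), dvdIndicator]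
  simp only [aeval_shift_stepGeomSum_apply, hper, Finset.sum_const, Finset.card_range,
    Pi.smul_apply, nsmul_eq_mul, smul_eq_mul]

theorem dvdIndicator_one : dvdIndicator R 1 = 1 := by
  funext t
  simp [dvdIndicator]

theorem dvd_of_mem_support_expand {p k : ℕ} (hp : 0 < p) {P : R[X]}
    (hk : k ∈ (expand R p P).support) : p ∣ k := by
  by_contra hpk
  simp [coeff_expand hp, hpk] at hk

theorem stepGeomSum_two_eq_expand (m : ℕ) :
    stepGeomSum R 2 m = expand R 2 (stepGeomSum R 1 m) := by
  simp [stepGeomSum, pow_mul]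

end Dilation

section RemoveIndicator

variable {R : Type*} [CommRing R]

theorem stepGeomSum_mem_shiftAnnihilator {k s c : ℕ} (hk : 0 < k) (hc : 0 < c)
    (h : s.Coprime c) :
    stepGeomSum R (k * s) c ∈
      shiftAnnihilator ((c : R) • dvdIndicator R (k * c) - dvdIndicator R k) := by
  rw [mem_shiftAnnihilator, map_sub, map_smul, aeval_stepGeomSum_dvdIndicator_mul hk hc h,
    aeval_stepGeomSum_dvdIndicator, sub_self]

theorem smul_aeval_cast_pow_mul_dvdIndicator {k c n : ℕ} {P : R[X]}
    (hP : P ∈ shiftAnnihilator ((c : R) • dvdIndicator R (k * c) - dvdIndicator R k) ^ (n + 1)) :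
    (c : R) • aeval (shift R) P (Int.cast ^ n * dvdIndicator R (k * c)) =
      aeval (shift R) P (Int.cast ^ n * dvdIndicator R k) := by
  have hzero := mem_shiftAnnihilator.1 (mem_shiftAnnihilator_cast_pow_mul hP)
  rwa [mul_sub, mul_smul_comm, map_sub, map_smul, sub_eq_zero] at hzero

theorem mul_aeval_eq_polysum_of_odd {b : ℕ} (hb : Odd b) (n q : ℕ) :
    (b : ℚ) * aeval (shift ℚ) (phi2 b ^ n * phi b) (Int.cast ^ n * dvdIndicator ℚ b) q =
      polysum (phi2 b ^ n * phi b) q n := by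
  have hphi2 := stepGeomSum_mem_shiftAnnihilator (R := ℚ) one_pos hb.pos hb.coprime_two_left
  have hphi := stepGeomSum_mem_shiftAnnihilator (R := ℚ) one_pos hb.pos (Nat.coprime_one_left b)
  have hprod := Ideal.mul_mem_mul (Ideal.pow_mem_pow hphi2 n) hphi
  rw [← pow_succ] at hprod
  have heval := congrFun (smul_aeval_cast_pow_mul_dvdIndicator hprod) q
  simp only [one_mul, dvdIndicator_one, mul_one, Pi.smul_apply, smul_eq_mul] at heval
  rw [polysum_eq_aeval_shift, phi_eq_stepGeomSum, phi2_eq_stepGeomSum, heval]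

theorem two_dvd_of_mem_support_phi2_pow_mul {n m c k : ℕ}
    (hk : k ∈ (phi2 m ^ n * phi2 c).support) : 2 ∣ k := by
  rw [phi2_eq_stepGeomSum, phi2_eq_stepGeomSum, stepGeomSum_two_eq_expand,
    stepGeomSum_two_eq_expand, ← map_pow, ← map_mul] at hk
  exact dvd_of_mem_support_expand two_pos hk

theorem phi_two_mul (c : ℕ) : phi (2 * c) = (1 + X) * phi2 c := by
  rw [phi_eq_stepGeomSum, stepGeomSum_mul, phi2_eq_stepGeomSum]
  simp only [stepGeomSum, Finset.sum_range_succ, Finset.sum_range_zero]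
  ring

theorem phi2_pow_mul_phi2_mem_shiftAnnihilator_pow {c : ℕ} (hc : 0 < c) (n : ℕ) :
    phi2 (2 * c) ^ n * phi2 c ∈
      shiftAnnihilator ((c : ℚ) • dvdIndicator ℚ (2 * c) - dvdIndicator ℚ 2) ^ (n + 1) := by
  have hphi2 := stepGeomSum_mem_shiftAnnihilator (R := ℚ) two_pos hc (Nat.coprime_one_left c)
  rw [pow_succ, phi2_eq_stepGeomSum, phi2_eq_stepGeomSum, mul_comm 2 c, stepGeomSum_mul,
    mul_comm c 2]
  exact Ideal.mul_mem_mul (Ideal.pow_mem_pow (Ideal.mul_mem_right _ _ hphi2) n) hphi2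

/- In `phi (2 * c) = (1 + X) * phi2 c`, the summand `1` reaches only odd arguments, where the
indicator of the multiples of `2 * c` vanishes, and the summand `X` only even ones, where the
indicator of the multiples of `2` equals `1`. -/
theorem mul_aeval_eq_two_mul_polysum_of_odd {c q : ℕ} (hc : 0 < c) (hq : Odd q) (n : ℕ) :
    ((2 * c : ℕ) : ℚ) * aeval (shift ℚ) (phi2 (2 * c) ^ n * phi (2 * c))
        (Int.cast ^ n * dvdIndicator ℚ (2 * c)) q =
      2 * polysum (X * phi2 (2 * c) ^ n * phi2 c) q n := by
  set H : ℚ[X] := phi2 (2 * c) ^ n * phi2 c with hH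
  have hsplit : phi2 (2 * c) ^ n * phi (2 * c) = H + X * H := by rw [phi_two_mul, hH]; ring
  obtain ⟨j, rfl⟩ := hq
  have hodd : aeval (shift ℚ) H (Int.cast ^ n * dvdIndicator ℚ (2 * c)) (2 * j + 1 : ℕ) = 0 := by
    rw [aeval_shift_congr (g := 0), map_zero, Pi.zero_apply]
    intro k hk
    have hnd : ¬ ((2 * c : ℕ) : ℤ) ∣ (2 * j + 1 : ℕ) - k := fun hd => by
      have := two_dvd_of_mem_support_phi2_pow_mul hk
      have := (Int.natCast_dvd_natCast.2 (Nat.dvd_mul_right 2 c)).trans hd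
      omega
    simp only [Pi.mul_apply, dvdIndicator, hnd, if_false, mul_zero, Pi.zero_apply]
  have heven : aeval (shift ℚ) H (Int.cast ^ n * dvdIndicator ℚ 2) ((2 * j + 1 : ℕ) - 1) =
      aeval (shift ℚ) H (Int.cast ^ n) ((2 * j + 1 : ℕ) - 1) := by
    refine aeval_shift_congr fun k hk => ?_
    have hd : ((2 : ℕ) : ℤ) ∣ (2 * j + 1 : ℕ) - 1 - k := by
      have := two_dvd_of_mem_support_phi2_pow_mul hk
      omega
    simp only [Pi.mul_apply, dvdIndicator, hd, if_true, mul_one]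
  have heval := congrFun (smul_aeval_cast_pow_mul_dvdIndicator
    (phi2_pow_mul_phi2_mem_shiftAnnihilator_pow hc n)) ((2 * j + 1 : ℕ) - 1)
  rw [Pi.smul_apply, smul_eq_mul, ← hH, heven] at heval
  rw [mul_assoc, ← hH, polysum_eq_aeval_shift, hsplit, map_add, LinearMap.add_apply, Pi.add_apply,
    hodd, zero_add, aeval_shift_X_mul, aeval_shift_X_mul, ← heval, Nat.cast_mul, mul_assoc,
    Nat.cast_two]

end RemoveIndicator

section GapVectors

theorem ncard_eq_sum_ncard_fiber {α β : Type*} {s : Set α} (hs : s.Finite) {f : α → β}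
    {T : Finset β} (hf : Set.MapsTo f s T) :
    s.ncard = ∑ y ∈ T, {x ∈ s | f x = y}.ncard := by
  classical
  lift s to Finset α using hs
  rw [Set.ncard_coe_finset, Finset.card_eq_sum_card_fiberwise hf]
  refine Finset.sum_congr rfl fun y _ => ?_
  rw [← Set.ncard_coe_finset, Finset.coe_filter]
  rfl

variable (R : Type*) [CommSemiring R] {ι : Type*} [Fintype ι]

/-- The solutions in natural numbers of `∑ i, w i * g i = t` subject to `b * d i ≤ g i`. The entries
of a solution are the successive gaps between the coordinates of a point; the gaps with `d i = 1`
are required to have size at least `b`. -/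
def gapVectors (w d : ι → ℕ) (b : ℕ) (t : ℤ) : Set (ι → ℕ) :=
  {g | ((∑ i, w i * g i : ℕ) : ℤ) = t ∧ ∀ i, b * d i ≤ g i}

/-- The dilation by `b` of a function on the integers, extended by `0` to the integers that `b` does
not divide. -/
def dilation (b : ℕ) : (ℤ → R) →ₗ[R] (ℤ → R) where
  toFun F t := if (b : ℤ) ∣ t then F (t / b) else 0
  map_add' F G := by
    funext t
    by_cases ht : (b : ℤ) ∣ t <;> simp [ht]
  map_smul' r F := by
    funext t
    by_cases ht : (b : ℤ) ∣ t <;> simp [ht]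

variable {R}

theorem dilation_apply (b : ℕ) (F : ℤ → R) (t : ℤ) :
    dilation R b F t = if (b : ℤ) ∣ t then F (t / b) else 0 := rfl

theorem finite_gapVectors {w : ι → ℕ} (hw : ∀ i, 0 < w i) (d : ι → ℕ) (b : ℕ) (t : ℤ) :
    (gapVectors w d b t).Finite := by
  classical
  refine (Set.finite_Icc 0 fun _ => t.toNat).subset
    fun g hg => ⟨fun _ => Nat.zero_le _, fun i => ?_⟩
  rw [← hg.1, Int.toNat_natCast]
  exact (Nat.le_mul_of_pos_left _ (hw i)).trans
    (Finset.single_le_sum (f := fun j => w j * g j) (fun _ _ => Nat.zero_le _) (Finset.mem_univ i))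

theorem sum_mul_mul_add (w h e : ι → ℕ) (b : ℕ) :
    ∑ i, w i * (b * h i + e i) = b * ∑ i, w i * h i + ∑ i, w i * e i := by
  simp only [Finset.mul_sum, ← Finset.sum_add_distrib]
  exact Finset.sum_congr rfl fun i _ => by ring

theorem mul_add_mem_gapVectors_iff {b : ℕ} {e : ι → ℕ} (he : ∀ i, e i < b) {w d h : ι → ℕ}
    {t : ℤ} :
    (fun i => b * h i + e i) ∈ gapVectors w d b t ↔
      h ∈ {h | (b : ℤ) * (∑ i, w i * h i : ℕ) = t - (∑ i, w i * e i : ℕ) ∧ ∀ i, d i ≤ h i} := by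
  rw [gapVectors, Set.mem_ofPred_eq, Set.mem_ofPred_eq, sum_mul_mul_add]
  refine and_congr ⟨fun h => ?_, fun h => ?_⟩ (forall_congr' fun i => ?_)
  · push_cast at h ⊢; linarith
  · push_cast at h ⊢; linarith
  · have hb : 0 < b := (he i).pos
    rw [mul_comm b (d i), ← Nat.le_div_iff_mul_le hb, Nat.mul_add_div hb, Nat.div_eq_of_lt (he i),
      add_zero]

theorem ncard_gapVectors_residue {b : ℕ} (hb : 0 < b) {e : ι → ℕ} (he : ∀ i, e i < b)
    (w d : ι → ℕ) (t : ℤ) :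
    ({g ∈ gapVectors w d b t | (fun i => g i % b) = e}.ncard : R) =
      dilation R b (fun s => ((gapVectors w d 1 s).ncard : R)) (t - (∑ i, w i * e i : ℕ)) := by
  have hbij : Set.BijOn (fun (h : ι → ℕ) i => b * h i + e i)
      {h | (b : ℤ) * (∑ i, w i * h i : ℕ) = t - (∑ i, w i * e i : ℕ) ∧ ∀ i, d i ≤ h i}
      {g ∈ gapVectors w d b t | (fun i => g i % b) = e} := by
    refine Set.InvOn.bijOn (f' := fun g i => g i / b) ⟨?_, ?_⟩ ?_ ?_
    · exact fun h _ => funext fun i => by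
        simp only [Nat.mul_add_div hb, Nat.div_eq_of_lt (he i), add_zero]
    · rintro g ⟨-, rfl⟩
      exact funext fun i => Nat.div_add_mod _ _
    · exact fun h hh => ⟨(mul_add_mem_gapVectors_iff he).2 hh,
        funext fun i => by simp only [Nat.mul_add_mod, Nat.mod_eq_of_lt (he i)]⟩
    · rintro g ⟨hg, rfl⟩
      rw [← mul_add_mem_gapVectors_iff he]
      simpa only [Nat.div_add_mod] using hg
  rw [← hbij.ncard_eq, dilation_apply]
  split_ifs with hdvd
  · obtain ⟨s, hs⟩ := hdvd
    have hb' : (b : ℤ) ≠ 0 := by exact_mod_cast hb.ne'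
    rw [hs, Int.mul_ediv_cancel_left _ hb']
    simp only [mul_right_inj' hb', gapVectors, one_mul]
  · have hne (m : ℕ) : (b : ℤ) * m ≠ t - (∑ i, w i * e i : ℕ) := fun h => hdvd ⟨m, h.symm⟩
    simp only [hne, false_and, Set.ofPred_false, Set.ncard_empty, Nat.cast_zero]

theorem aeval_shift_prod_stepGeomSum_apply [DecidableEq ι] (w : ι → ℕ) (b : ℕ) (F : ℤ → R)
    (t : ℤ) :
    aeval (shift R) (∏ i, stepGeomSum R (w i) b) F t =
      ∑ e ∈ Fintype.piFinset fun _ : ι => Finset.range b, F (t - (∑ i, w i * e i : ℕ)) := by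
  simp only [stepGeomSum]
  rw [Finset.prod_univ_sum, map_sum, LinearMap.sum_apply, Finset.sum_apply]
  refine Finset.sum_congr rfl fun e _ => ?_
  rw [Finset.prod_pow_eq_pow_sum, map_pow, aeval_X, shift_pow_apply]

theorem ncard_gapVectors_eq_aeval_dilation {w : ι → ℕ} (hw : ∀ i, 0 < w i) (d : ι → ℕ) {b : ℕ}
    (hb : 0 < b) (t : ℤ) :
    ((gapVectors w d b t).ncard : R) = aeval (shift R) (∏ i, stepGeomSum R (w i) b)
      (dilation R b fun s => ((gapVectors w d 1 s).ncard : R)) t := by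
  classical
  have hmaps : Set.MapsTo (fun (g : ι → ℕ) i => g i % b) (gapVectors w d b t)
      (Fintype.piFinset fun _ : ι => Finset.range b) := fun g _ => by
    simpa using fun i => Nat.mod_lt _ hb
  rw [ncard_eq_sum_ncard_fiber (finite_gapVectors hw d b t) hmaps, Nat.cast_sum,
    aeval_shift_prod_stepGeomSum_apply]
  refine Finset.sum_congr rfl fun e he => ncard_gapVectors_residue hb (fun i => ?_) w d t
  exact Finset.mem_range.1 (Fintype.mem_piFinset.1 he i)

end GapVectors

section Chains

theorem partialSum_last {M : Type*} [AddCommMonoid M] {n : ℕ} (f : Fin n → M) :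
    Fin.partialSum f (Fin.last n) = ∑ i, f i := by
  rw [← List.sum_ofFn, Fin.partialSum, Fin.val_last, List.take_of_length_le (by simp)]

/-- The sequences `0 = u 0 ≤ u 1 ≤ ⋯ ≤ u n ≤ q / 2` whose steps, including the final step
`q - 2 * u n`, have size at least `b` wherever `d` equals `1`. The final step is indexed by
`none`. -/
def gappedChains {n : ℕ} (d : Option (Fin n) → ℕ) (b q : ℕ) : Set (Fin (n + 1) → ℕ) :=
  {u | u 0 = 0 ∧ (∀ i : Fin n, u i.castSucc + b * d (some i) ≤ u i.succ) ∧
    2 * u (Fin.last n) + b * d none ≤ q}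

/-- The weights of the gaps of a chain: `q` is the final gap plus twice each of the others. -/
def gapWeight {n : ℕ} (o : Option (Fin n)) : ℕ := o.elim 1 fun _ => 2

theorem sum_gapWeight_mul {n : ℕ} (g : Option (Fin n) → ℕ) :
    ∑ o, gapWeight o * g o = g none + 2 * ∑ i, g (some i) := by
  simp [Fintype.sum_option, gapWeight, Finset.mul_sum]

theorem gapWeight_pos {n : ℕ} (o : Option (Fin n)) : 0 < gapWeight o := by
  cases o <;> simp [gapWeight]

theorem prod_stepGeomSum_gapWeight (n b : ℕ) :
    ∏ o : Option (Fin n), stepGeomSum ℚ (gapWeight o) b = phi2 b ^ n * phi b := by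
  simp [Fintype.prod_option, gapWeight, phi_eq_stepGeomSum, phi2_eq_stepGeomSum, mul_comm]

theorem partialSum_sub_of_le {n : ℕ} {u : Fin (n + 1) → ℕ} (h0 : u 0 = 0)
    (hu : ∀ i : Fin n, u i.castSucc ≤ u i.succ) :
    Fin.partialSum (fun i : Fin n => u i.succ - u i.castSucc) = u := by
  funext k
  induction k using Fin.induction with
  | zero => rw [Fin.partialSum_zero, h0]
  | succ i ih => rw [Fin.partialSum_succ, ih, Nat.add_sub_cancel' (hu i)]

theorem ncard_gappedChains {n : ℕ} (d : Option (Fin n) → ℕ) (b q : ℕ) :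
    (gappedChains d b q).ncard = (gapVectors gapWeight d b q).ncard := by
  refine Set.BijOn.ncard_eq (Set.InvOn.bijOn
    (f := fun u o => o.elim (q - 2 * u (Fin.last n)) fun i => u i.succ - u i.castSucc)
    (f' := fun g => Fin.partialSum fun i => g (some i)) ⟨?_, ?_⟩ ?_ ?_)
  · rintro u ⟨h0, hstep, -⟩
    exact partialSum_sub_of_le h0 fun i => le_of_add_le_left (hstep i)
  · rintro g ⟨hsum, -⟩
    rw [sum_gapWeight_mul, Nat.cast_inj] at hsum
    funext o
    cases o with
    | none => simp only [Option.elim, partialSum_last]; omega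
    | some i => simp only [Option.elim, Fin.partialSum_succ, Nat.add_sub_cancel_left]
  · rintro u ⟨h0, hstep, hlast⟩
    refine ⟨?_, fun o => ?_⟩
    · simp only [sum_gapWeight_mul, Option.elim, ← partialSum_last,
        partialSum_sub_of_le h0 fun i => le_of_add_le_left (hstep i)]
      omega
    · cases o with
      | none => simp only [Option.elim]; omega
      | some i => have := hstep i; simp only [Option.elim]; omega
  · rintro g ⟨hsum, hg⟩
    rw [sum_gapWeight_mul, Nat.cast_inj] at hsum
    refine ⟨Fin.partialSum_zero _, fun i => ?_, ?_⟩
    · simp only [Fin.partialSum_succ]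
      exact Nat.add_le_add_left (hg _) _
    · have := hg none
      simp only [partialSum_last]
      omega

theorem forall_step_iff_monotone_and_forall_lt {α : Type*} [LinearOrder α] {m b : ℕ}
    {u : Fin (m + 1) → ℕ} {r : Fin (m + 1) → α} :
    (∀ i : Fin m, u i.castSucc + b * (if r i.succ < r i.castSucc then 1 else 0) ≤ u i.succ) ↔
      Monotone u ∧ ∀ i j, i < j → r j < r i → u i + b ≤ u j := by
  constructor
  · intro hstep
    have hmono : Monotone u := Fin.monotone_iff_le_succ.2 fun i => le_of_add_le_left (hstep i)
    refine ⟨hmono, fun i j => ?_⟩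
    induction j using Fin.induction with
    | zero => exact fun hi => absurd hi (Fin.not_lt_zero i)
    | succ j ih =>
      intro hij hr
      have hij' : i ≤ j.castSucc := Fin.le_castSucc_iff.2 hij
      by_cases hrj : r j.castSucc < r i
      · exact (ih (hij'.lt_of_ne fun h => hrj.ne (h ▸ rfl)) hrj).trans
          (hmono (Fin.castSucc_le_succ j))
      · have := hstep j
        rw [if_pos (hr.trans_le (not_lt.1 hrj)), mul_one] at this
        exact (Nat.add_le_add_right (hmono hij') b).trans this
  · rintro ⟨hmono, hdescent⟩ i
    split_ifs with hr
    · exact (mul_one b).symm ▸ hdescent _ _ Fin.castSucc_lt_succ hr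
    · exact hmono (Fin.castSucc_le_succ i)

end Chains

section SignedOrder

variable {n : ℕ}

/-- A total order on the indices, extended to the origin by giving it rank `0`: the indices in `P`,
which stand for positive coordinates, come before the origin in their usual order, and the other
indices come after it in reverse order. -/
def signedRank (P : Finset (Fin n)) (i : Fin n) : ℤ := if i ∈ P then i - n else n - i

theorem signedRank_neg_iff {P : Finset (Fin n)} {i : Fin n} : signedRank P i < 0 ↔ i ∈ P := by
  unfold signedRank; split_ifs <;> simp_all

theorem signedRank_pos_iff {P : Finset (Fin n)} {i : Fin n} : 0 < signedRank P i ↔ i ∉ P := by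
  unfold signedRank; split_ifs <;> simp_all

theorem signedRank_injective (P : Finset (Fin n)) : Function.Injective (signedRank P) := by
  intro i j h
  unfold signedRank at h
  split_ifs at h <;> omega

theorem signedRank_lt_iff {P : Finset (Fin n)} {i j : Fin n} (hij : i < j) :
    signedRank P i < signedRank P j ↔ i ∈ P := by
  unfold signedRank; split_ifs <;> simp_all <;> omega

/-- The ranks of the origin and of the indices listed in the order `σ`. -/
def chainRank (P : Finset (Fin n)) (σ : Equiv.Perm (Fin n)) : Fin (n + 1) → ℤ :=
  Fin.cons 0 (signedRank P ∘ σ)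

/-- Marks by `1` the positions where the rank drops along the order `σ`; the closing position `none`
is marked when the last rank exceeds that of the origin. -/
def descent (P : Finset (Fin n)) (σ : Equiv.Perm (Fin n)) : Option (Fin n) → ℕ
  | some i => if chainRank P σ i.succ < chainRank P σ i.castSucc then 1 else 0
  | none => if 0 < chainRank P σ (Fin.last n) then 1 else 0

/-- The indices of the positive coordinates. -/
def positives (X : Fin n → ℤ) : Finset (Fin n) := {i | 0 < X i}

/-- Orders the coordinates by absolute value, ties being broken by `signedRank`. -/
def sortKey (X : Fin n → ℤ) (i : Fin n) : ℕ ×ₗ ℤ :=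
  toLex ((X i).natAbs, signedRank (positives X) i)

theorem sortKey_injective (X : Fin n → ℤ) : Function.Injective (sortKey X) := fun _ _ h =>
  signedRank_injective _ (congrArg (fun p => (ofLex p).2) h)

theorem sort_eq_iff_strictMono {α : Type*} [LinearOrder α] {f : Fin n → α}
    (hf : Function.Injective f) {σ : Equiv.Perm (Fin n)} :
    Tuple.sort f = σ ↔ StrictMono (f ∘ σ) := by
  rw [eq_comm, Tuple.eq_sort_iff]
  refine ⟨fun h => h.1.strictMono_of_injective (hf.comp σ.injective), fun h => ⟨h.monotone, ?_⟩⟩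
  exact fun i j hij heq => absurd heq (h hij).ne

theorem sortKey_lt_iff {X : Fin n → ℤ} {i j : Fin n} :
    sortKey X i < sortKey X j ↔ (X i).natAbs < (X j).natAbs ∨
      (X i).natAbs = (X j).natAbs ∧ signedRank (positives X) i < signedRank (positives X) j :=
  Prod.Lex.toLex_lt_toLex

/-- The points counted by `N_BC n q 1 (b - 1)`, represented by integers in `(-q/2, q/2]`, with the
avoidance conditions rephrased through absolute values and ranks. -/
def validPoints (n b q : ℕ) : Set (Fin n → ℤ) :=
  {X | (∀ i, (0 < X i → b ≤ (X i).natAbs ∧ 2 * (X i).natAbs ≤ q) ∧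
      (X i ≤ 0 → 2 * (X i).natAbs + b ≤ q)) ∧
    ∀ i j, signedRank (positives X) i < signedRank (positives X) j →
      (X i).natAbs ≤ (X j).natAbs ∨ (X j).natAbs + b ≤ (X i).natAbs}

theorem finite_validPoints (n b q : ℕ) : (validPoints n b q).Finite := by
  refine (Set.finite_Icc (fun _ => -(q : ℤ)) fun _ => (q : ℤ)).subset fun X hX => ?_
  refine ⟨fun i => ?_, fun i => ?_⟩ <;> have := hX.1 i <;> dsimp only <;> omega

theorem mem_positives {X : Fin n → ℤ} {i : Fin n} : i ∈ positives X ↔ 0 < X i := by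
  simp [positives]

theorem mem_gappedChains_descent_iff {P : Finset (Fin n)} {σ : Equiv.Perm (Fin n)} {b q : ℕ}
    {u : Fin (n + 1) → ℕ} :
    u ∈ gappedChains (descent P σ) b q ↔ u 0 = 0 ∧
      (Monotone u ∧ ∀ i j, i < j → chainRank P σ j < chainRank P σ i → u i + b ≤ u j) ∧
      2 * u (Fin.last n) + b * (if 0 < chainRank P σ (Fin.last n) then 1 else 0) ≤ q := by
  rw [← forall_step_iff_monotone_and_forall_lt]
  rfl

/-- The absolute values of the coordinates in the order `σ`, preceded by `0`. -/
def absChain (σ : Equiv.Perm (Fin n)) (X : Fin n → ℤ) : Fin (n + 1) → ℕ :=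
  Fin.cons 0 fun k => (X (σ k)).natAbs

/-- The point whose absolute values in the order `σ` are the entries of `u` after the first, and
whose positive coordinates are indexed by `P`. -/
def signedPoint (P : Finset (Fin n)) (σ : Equiv.Perm (Fin n)) (u : Fin (n + 1) → ℕ) (i : Fin n) :
    ℤ :=
  if i ∈ P then u (σ.symm i).succ else -u (σ.symm i).succ

theorem natAbs_signedPoint (P : Finset (Fin n)) (σ : Equiv.Perm (Fin n)) (u : Fin (n + 1) → ℕ)
    (i : Fin n) : (signedPoint P σ u i).natAbs = u (σ.symm i).succ := by
  unfold signedPoint; split_ifs <;> simp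

theorem signedPoint_absChain (σ : Equiv.Perm (Fin n)) (X : Fin n → ℤ) :
    signedPoint (positives X) σ (absChain σ X) = X := by
  funext i
  by_cases hi : 0 < X i <;> simp [signedPoint, absChain, mem_positives, hi] <;> grind

theorem absChain_signedPoint (P : Finset (Fin n)) {σ : Equiv.Perm (Fin n)} {u : Fin (n + 1) → ℕ}
    (hu : u 0 = 0) : absChain σ (signedPoint P σ u) = u := by
  funext k
  cases k using Fin.cases with
  | zero => exact hu.symm
  | succ k => simp [absChain, natAbs_signedPoint]

theorem absChain_monotone {X : Fin n → ℤ} {σ : Equiv.Perm (Fin n)}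
    (hσ : StrictMono (sortKey X ∘ σ)) : Monotone (absChain σ X) := by
  intro k l hkl
  cases k using Fin.cases with
  | zero => exact Nat.zero_le _
  | succ k =>
    cases l using Fin.cases with
    | zero => exact absurd hkl (Fin.succ_pos k).not_ge
    | succ l => exact Prod.Lex.monotone_fst_ofLex (hσ.monotone (Fin.succ_le_succ_iff.1 hkl))

theorem absChain_mem_gappedChains {b q : ℕ} {X : Fin n → ℤ} (hX : X ∈ validPoints n b q)
    {σ : Equiv.Perm (Fin n)} (hσ : StrictMono (sortKey X ∘ σ)) :
    absChain σ X ∈ gappedChains (descent (positives X) σ) b q := by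
  obtain ⟨hcoord, hpair⟩ := hX
  rw [mem_gappedChains_descent_iff]
  refine ⟨rfl, ⟨absChain_monotone hσ, fun k l hkl hr => ?_⟩, ?_⟩
  · obtain ⟨l, rfl⟩ := Fin.eq_succ_of_ne_zero (Fin.ne_zero_of_lt hkl)
    cases k using Fin.cases with
    | zero =>
      have hpos : 0 < X (σ l) := mem_positives.1 (signedRank_neg_iff.1 hr)
      exact (Nat.zero_add b).symm ▸ ((hcoord _).1 hpos).1
    | succ k =>
      have hkl' := sortKey_lt_iff.1 (hσ (Fin.succ_lt_succ_iff.1 hkl))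
      have hr' : signedRank (positives X) (σ l) < signedRank (positives X) (σ k) := hr
      have := hpair _ _ hr'
      change (X (σ k)).natAbs + b ≤ (X (σ l)).natAbs
      omega
  · cases Fin.last n using Fin.cases with
    | zero => exact Nat.zero_le q
    | succ k =>
      change 2 * (X (σ k)).natAbs + b * (if 0 < signedRank (positives X) (σ k) then 1 else 0) ≤ q
      simp only [signedRank_pos_iff, mem_positives]
      have := hcoord (σ k)
      split_ifs <;> omega

theorem chainRank_succ_symm (P : Finset (Fin n)) (σ : Equiv.Perm (Fin n)) (i : Fin n) :
    chainRank P σ (σ.symm i).succ = signedRank P i := by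
  simp [chainRank]

section

variable {b q : ℕ} {P : Finset (Fin n)} {σ : Equiv.Perm (Fin n)} {u : Fin (n + 1) → ℕ}

theorem le_of_mem_gappedChains (hu : u ∈ gappedChains (descent P σ) b q) {i : Fin n} (hi : i ∈ P) :
    b ≤ u (σ.symm i).succ := by
  obtain ⟨h0, ⟨-, hdescent⟩, -⟩ := mem_gappedChains_descent_iff.1 hu
  have := hdescent 0 (σ.symm i).succ (Fin.succ_pos _)
    ((chainRank_succ_symm P σ i).trans_lt (signedRank_neg_iff.2 hi))
  omega

theorem two_mul_add_le_of_notMem (hu : u ∈ gappedChains (descent P σ) b q) {i : Fin n}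
    (hi : i ∉ P) : 2 * u (σ.symm i).succ + b ≤ q := by
  obtain ⟨-, ⟨hmono, hdescent⟩, hlast⟩ := mem_gappedChains_descent_iff.1 hu
  have hle := hmono (Fin.le_last (σ.symm i).succ)
  have hrank : 0 < chainRank P σ (σ.symm i).succ :=
    (signedRank_pos_iff.2 hi).trans_eq (chainRank_succ_symm P σ i).symm
  split_ifs at hlast with hlast_rank
  · omega
  · have hlt : (σ.symm i).succ < Fin.last n :=
      Fin.lt_last_iff_ne_last.2 fun h => hlast_rank (h ▸ hrank)
    have := hdescent _ _ hlt ((not_lt.1 hlast_rank).trans_lt hrank)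
    omega

theorem positives_signedPoint (hb : 0 < b) (hu : u ∈ gappedChains (descent P σ) b q) :
    positives (signedPoint P σ u) = P := by
  ext i
  rw [mem_positives, signedPoint]
  split_ifs with hi
  · have := le_of_mem_gappedChains hu hi
    simp only [hi, iff_true]
    omega
  · simp only [hi, iff_false]
    omega

theorem signedPoint_mem_validPoints (hb : 0 < b) (hu : u ∈ gappedChains (descent P σ) b q) :
    signedPoint P σ u ∈ validPoints n b q := by
  obtain ⟨-, ⟨hmono, hdescent⟩, hlast⟩ := mem_gappedChains_descent_iff.1 hu
  rw [validPoints, Set.mem_ofPred_eq, positives_signedPoint hb hu]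
  simp only [natAbs_signedPoint]
  refine ⟨fun i => ?_, fun i j hr => ?_⟩
  · have hpos : 0 < signedPoint P σ u i ↔ i ∈ P := by
      rw [← mem_positives, positives_signedPoint hb hu]
    have := hmono (Fin.le_last (σ.symm i).succ)
    exact ⟨fun hi => ⟨le_of_mem_gappedChains hu (hpos.1 hi), by omega⟩,
      fun hi => two_mul_add_le_of_notMem hu fun h => hi.not_gt (hpos.2 h)⟩
  · rw [← chainRank_succ_symm P σ, ← chainRank_succ_symm P σ] at hr
    rcases le_or_gt (σ.symm i).succ (σ.symm j).succ with hij | hij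
    · exact Or.inl (hmono hij)
    · exact Or.inr (hdescent _ _ hij hr)

theorem strictMono_sortKey_signedPoint (hb : 0 < b) (hu : u ∈ gappedChains (descent P σ) b q) :
    StrictMono (sortKey (signedPoint P σ u) ∘ σ) := by
  obtain ⟨-, ⟨hmono, hdescent⟩, -⟩ := mem_gappedChains_descent_iff.1 hu
  intro k l hkl
  have hkl' : k.succ < l.succ := Fin.succ_lt_succ_iff.2 hkl
  rw [Function.comp_apply, Function.comp_apply, sortKey_lt_iff, positives_signedPoint hb hu,
    natAbs_signedPoint, natAbs_signedPoint, σ.symm_apply_apply, σ.symm_apply_apply]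
  refine (hmono hkl'.le).lt_or_eq.imp_right fun heq => ⟨heq, ?_⟩
  have hle : signedRank P (σ k) ≤ signedRank P (σ l) :=
    not_lt.1 fun hr => by have := hdescent _ _ hkl' hr; omega
  exact hle.lt_of_ne ((signedRank_injective P).comp σ.injective |>.ne hkl.ne)

theorem ncard_validPoints_fiber (hb : 0 < b) (q : ℕ) (P : Finset (Fin n))
    (σ : Equiv.Perm (Fin n)) :
    {X ∈ validPoints n b q | (positives X, Tuple.sort (sortKey X)) = (P, σ)}.ncard =
      (gappedChains (descent P σ) b q).ncard := by
  refine Set.BijOn.ncard_eq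
    (Set.InvOn.bijOn (f := absChain σ) (f' := signedPoint P σ) ⟨?_, ?_⟩ ?_ ?_)
  · rintro X ⟨-, h⟩
    obtain ⟨rfl, -⟩ := Prod.mk.inj h
    exact signedPoint_absChain σ X
  · exact fun u hu => absChain_signedPoint P hu.1
  · rintro X ⟨hX, h⟩
    obtain ⟨rfl, hσ⟩ := Prod.mk.inj h
    exact absChain_mem_gappedChains hX ((sort_eq_iff_strictMono (sortKey_injective X)).1 hσ)
  · exact fun u hu => ⟨signedPoint_mem_validPoints hb hu, Prod.ext (positives_signedPoint hb hu)
      ((sort_eq_iff_strictMono (sortKey_injective _)).2 (strictMono_sortKey_signedPoint hb hu))⟩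

theorem ncard_validPoints (n : ℕ) (hb : 0 < b) (q : ℕ) :
    (validPoints n b q).ncard = ∑ w : Finset (Fin n) × Equiv.Perm (Fin n),
      (gapVectors gapWeight (descent w.1 w.2) b q).ncard := by
  rw [ncard_eq_sum_ncard_fiber (finite_validPoints n b q)
    (f := fun X => (positives X, Tuple.sort (sortKey X))) (T := Finset.univ)
    fun X _ => Finset.mem_coe.2 (Finset.mem_univ _)]
  refine Finset.sum_congr rfl fun w _ => ?_
  rw [ncard_validPoints_fiber hb, ncard_gappedChains]

end

end SignedOrder

section Representatives

theorem avoids_intCast_iff {q a : ℕ} (haq : a < q) {Z : ℤ} (hZ : -q < Z) (hZ' : Z ≤ q) :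
    Avoids (Z : ZMod q) 1 a ↔ (Z ≤ 0 ∨ a < Z) ∧ a < Z + q := by
  constructor
  · intro h
    refine ⟨?_, ?_⟩ <;> by_contra! hle
    · exact h Z (by omega) (by omega) rfl
    · exact h (Z + q) (by omega) hle (by simp)
  · rintro ⟨hZa, hZq⟩ k hk hka heq
    obtain ⟨m, hm⟩ := (ZMod.intCast_eq_intCast_iff_dvd_sub _ _ _).1 heq
    have hlt : m < 2 := by by_contra! hm2; nlinarith
    have hgt : -1 < m := by by_contra! hm1; nlinarith
    interval_cases m <;> omega

theorem avoids_coord_iff {q a : ℕ} (haq : a < q) {Z : ℤ} (hZ : -q < 2 * Z) (hZ' : 2 * Z ≤ q) :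
    Avoids (Z : ZMod q) 1 a ∧ Avoids (2 * Z : ZMod q) 1 a ↔
      (0 < Z → a + 1 ≤ Z.natAbs ∧ 2 * Z.natAbs ≤ q) ∧ (Z ≤ 0 → 2 * Z.natAbs + (a + 1) ≤ q) := by
  have htwo : (2 * Z : ZMod q) = ((2 * Z : ℤ) : ZMod q) := by push_cast; rfl
  rw [htwo, avoids_intCast_iff haq (by omega) (by omega), avoids_intCast_iff haq hZ hZ']
  omega

theorem avoids_pair_iff {q a : ℕ} (haq : a < q) {Y Z : ℤ}
    (hY : (0 < Y → a + 1 ≤ Y.natAbs ∧ 2 * Y.natAbs ≤ q) ∧ (Y ≤ 0 → 2 * Y.natAbs + (a + 1) ≤ q))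
    (hZ : (0 < Z → a + 1 ≤ Z.natAbs ∧ 2 * Z.natAbs ≤ q) ∧ (Z ≤ 0 → 2 * Z.natAbs + (a + 1) ≤ q)) :
    Avoids (Y - Z : ZMod q) 1 a ∧ Avoids (Y + Z : ZMod q) 1 a ↔
      (0 < Y → Y.natAbs ≤ Z.natAbs ∨ Z.natAbs + (a + 1) ≤ Y.natAbs) ∧
      (Y ≤ 0 → Z.natAbs ≤ Y.natAbs ∨ Y.natAbs + (a + 1) ≤ Z.natAbs) := by
  rw [← Int.cast_sub, ← Int.cast_add, avoids_intCast_iff haq (by omega) (by omega),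
    avoids_intCast_iff haq (by omega) (by omega)]
  rcases le_or_gt Y 0 with hY0 | hY0 <;> rcases le_or_gt Z 0 with hZ0 | hZ0 <;> omega

theorem forall_signedRank_lt_iff {n : ℕ} {P : Finset (Fin n)} {p : Fin n → Fin n → Prop} :
    (∀ i j, signedRank P i < signedRank P j → p i j) ↔
      ∀ i j, i < j → (i ∈ P → p i j) ∧ (i ∉ P → p j i) := by
  constructor
  · refine fun h i j hij => ⟨fun hi => h i j ((signedRank_lt_iff hij).2 hi), fun hi => h j i ?_⟩
    refine (not_lt.1 (mt (signedRank_lt_iff hij).1 hi)).lt_of_ne ?_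
    exact (signedRank_injective P).ne hij.ne'
  · intro h i j hr
    rcases lt_trichotomy i j with hij | rfl | hij
    · exact (h i j hij).1 ((signedRank_lt_iff hij).1 hr)
    · exact absurd hr (lt_irrefl _)
    · exact (h j i hij).2 (mt (signedRank_lt_iff hij).2 hr.not_gt)

theorem mem_validPoints_iff {n a q : ℕ} (haq : a < q) {X : Fin n → ℤ}
    (hX : ∀ i, -q < 2 * X i ∧ 2 * X i ≤ q) :
    X ∈ validPoints n (a + 1) q ↔
      (∀ i, Avoids (X i : ZMod q) 1 a ∧ Avoids (2 * X i : ZMod q) 1 a) ∧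
        ∀ i j, i < j → Avoids (X i - X j : ZMod q) 1 a ∧ Avoids (X i + X j : ZMod q) 1 a := by
  simp only [validPoints, Set.mem_ofPred_eq, forall_signedRank_lt_iff, mem_positives, not_lt,
    avoids_coord_iff haq (hX _).1 (hX _).2]
  refine and_congr_right fun hcoord => forall₂_congr fun i j => imp_congr_right fun _ => ?_
  exact (avoids_pair_iff haq (hcoord i) (hcoord j)).symm

theorem N_BC_eq_ncard_validPoints {a q : ℕ} (n : ℕ) (haq : a < q) :
    N_BC n q 1 a = (validPoints n (a + 1) q).ncard := by
  have : NeZero q := ⟨by omega⟩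
  have hrange (x : Fin n → ZMod q) (i : Fin n) :
      -q < 2 * (x i).valMinAbs ∧ 2 * (x i).valMinAbs ≤ q := by
    simpa only [mul_comm, Set.mem_Ioc] using (x i).valMinAbs_mem_Ioc
  refine Set.BijOn.ncard_eq (Set.InvOn.bijOn (f := fun x i => (x i).valMinAbs)
    (f' := fun X i => (X i : ZMod q)) ⟨?_, ?_⟩ ?_ ?_)
  · exact fun x _ => funext fun i => ZMod.coe_valMinAbs _
  · refine fun X hX => funext fun i => (ZMod.valMinAbs_spec _ _).2 ⟨rfl, ?_⟩
    have := hX.1 i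
    constructor <;> omega
  · intro x hx
    rw [mem_validPoints_iff haq (hrange x)]
    simp only [ZMod.coe_valMinAbs]
    exact hx
  · intro X hX
    refine (mem_validPoints_iff haq fun i => ?_).1 hX
    have := hX.1 i
    omega

theorem N_BC_one_zero (n t : ℕ) : N_BC n t 1 0 = t ^ n := by
  have havoids (x : ZMod t) : Avoids x 1 0 := fun k hk hk0 => by omega
  simp [N_BC, havoids, Set.ncard_univ, Nat.card_fun]

theorem ncard_validPoints_one (n : ℕ) {t : ℕ} (ht : 0 < t) : (validPoints n 1 t).ncard = t ^ n := by
  rw [← N_BC_one_zero, ← Nat.cast_zero, N_BC_eq_ncard_validPoints n ht]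

theorem natDegree_stepGeomSum_succ_le {R : Type*} [CommSemiring R] (s m : ℕ) :
    (stepGeomSum R s (m + 1)).natDegree ≤ s * m :=
  natDegree_sum_le_of_forall_le _ _ fun _ hi => (natDegree_X_pow_le _).trans
    (Nat.mul_le_mul_left s (Finset.mem_range_succ_iff.1 hi))

theorem natDegree_phi2_pow_mul_phi_le (n a : ℕ) :
    (phi2 (a + 1) ^ n * phi (a + 1)).natDegree ≤ (2 * n + 1) * a := by
  rw [phi2_eq_stepGeomSum, phi_eq_stepGeomSum]
  refine (natDegree_mul_le_of_le (natDegree_pow_le_of_le n (natDegree_stepGeomSum_succ_le 2 a))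
    (natDegree_stepGeomSum_succ_le 1 a)).trans_eq ?_
  ring

/-- The sum of the numbers of gap vectors for `b = 1` over all sign patterns and orders, as a
function on the integers. It equals `t ^ n` only at positive `t`: there are no gap vectors for
negative `t`. -/
noncomputable def alcoveCount (n : ℕ) : ℤ → ℚ :=
  ∑ w : Finset (Fin n) × Equiv.Perm (Fin n), fun t =>
    ((gapVectors gapWeight (descent w.1 w.2) 1 t).ncard : ℚ)

theorem alcoveCount_natCast (n : ℕ) {t : ℕ} (ht : 0 < t) : alcoveCount n t = (t : ℚ) ^ n := by
  rw [← Nat.cast_pow, ← ncard_validPoints_one n ht, ncard_validPoints n one_pos, Nat.cast_sum,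
    alcoveCount, Finset.sum_apply]

theorem N_BC_eq_aeval_dilation_alcoveCount {a q : ℕ} (n : ℕ) (haq : a < q) :
    (N_BC n q 1 a : ℚ) = aeval (shift ℚ) (phi2 (a + 1) ^ n * phi (a + 1))
      (dilation ℚ (a + 1) (alcoveCount n)) q := by
  rw [N_BC_eq_ncard_validPoints n haq, ncard_validPoints n a.succ_pos, Nat.cast_sum, alcoveCount,
    map_sum, map_sum, Finset.sum_apply, ← prod_stepGeomSum_gapWeight]
  exact Finset.sum_congr rfl fun w _ =>
    ncard_gapVectors_eq_aeval_dilation gapWeight_pos _ a.succ_pos q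

theorem pow_mul_dilation_alcoveCount {b : ℕ} (hb : 0 < b) (n : ℕ) {t : ℤ} (ht : 0 < t) :
    (b : ℚ) ^ n * dilation ℚ b (alcoveCount n) t = (t : ℚ) ^ n * dvdIndicator ℚ b t := by
  rw [dilation_apply, dvdIndicator]
  split_ifs with hdvd
  · obtain ⟨m, rfl⟩ := hdvd
    have hm : 0 < m := pos_of_mul_pos_right ht (Nat.cast_nonneg b)
    lift m to ℕ using hm.le
    rw [Int.mul_ediv_cancel_left _ (Nat.cast_ne_zero.2 hb.ne'),
      alcoveCount_natCast n (Nat.cast_pos.1 hm)]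
    push_cast
    ring
  · rw [mul_zero, mul_zero]

theorem pow_mul_N_BC_eq_aeval {n a q : ℕ} (hq : (2 * n + 1) * a < q) :
    ((a + 1 : ℕ) : ℚ) ^ n * N_BC n q 1 a = aeval (shift ℚ) (phi2 (a + 1) ^ n * phi (a + 1))
      (Int.cast ^ n * dvdIndicator ℚ (a + 1)) q := by
  have haq : a < q := (Nat.le_mul_of_pos_left a (by omega)).trans_lt hq
  rw [N_BC_eq_aeval_dilation_alcoveCount n haq, ← smul_eq_mul, ← Pi.smul_apply, ← map_smul]
  refine aeval_shift_congr fun k hk => pow_mul_dilation_alcoveCount a.succ_pos n ?_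
  have := (le_natDegree_of_mem_supp k hk).trans (natDegree_phi2_pow_mul_phi_le n a)
  omega

end Representatives

theorem statement12_general (n a q : ℕ) (hq : (2 * n + 1) * a < q) :
    (Odd a → Odd q →
      ((a : ℚ) + 1) ^ (n + 1) * (N_BC n q 1 (a : ℤ) : ℚ) =
        2 * polysum (X * (phi2 (a + 1)) ^ n * phi2 ((a + 1) / 2)) q n) ∧
    (Even a →
      ((a : ℚ) + 1) ^ (n + 1) * (N_BC n q 1 (a : ℤ) : ℚ) =
        polysum ((phi2 (a + 1)) ^ n * phi (a + 1)) q n) := by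
  rw [← Nat.cast_add_one, pow_succ', mul_assoc, pow_mul_N_BC_eq_aeval hq]
  refine ⟨fun ha hqodd => ?_, fun ha => mul_aeval_eq_polysum_of_odd ha.add_one n q⟩
  obtain ⟨c, hc⟩ := ha.add_one.two_dvd
  rw [hc, Nat.mul_div_cancel_left c two_pos]
  exact mul_aeval_eq_two_mul_polysum_of_odd (by omega) hqodd n

/-- Corollary 4.8. Formula for the number of points avoiding the
extended Linial arrangement of type `BC_n` (hyperplanes `x_i, 2x_i, x_i ± x_j
= 1, ..., a`), for all large odd `q`. -/
theorem statement12 (n a : ℕ) (hn : 2 ≤ n) (ha : 1 ≤ a) :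
    ∃ N : ℕ, ∀ q : ℕ, Odd q → N < q →
      (Odd a →
        ((a : ℚ) + 1) ^ (n + 1) * (N_BC n q 1 (a : ℤ) : ℚ) =
          2 * polysum (X * (phi2 (a + 1)) ^ n * phi2 ((a + 1) / 2)) q n) ∧
      (Even a →
        ((a : ℚ) + 1) ^ (n + 1) * (N_BC n q 1 (a : ℤ) : ℚ) =
          polysum ((phi2 (a + 1)) ^ n * phi (a + 1)) q n) := by
  exact ⟨_, fun q hqodd hq =>
    (statement12_general n a q hq).imp_left fun hodd ha => hodd ha hqodd⟩
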